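/- arXiv:2011.07836 — 4 statements merged into one kernel-verified Lean document; each statement's English description precedes it below -/
import Mathlib

section
/- Fractional Hardy–Poincaré inequality for Lévy–Fokker–Planck equilibria. Let d ≥ 1, s ∈ (0,1), α > s, β := 2s − α, and let M(v) := c_{α,β}⌊v⌉^{−(d+α)} be the power-law equilibrium with parameters (α,β) normalized so that ∫_{ℝ^d} ⌊v⌉^{−β} M(v) dv = 1. Then there exists λ > 0 (depending on d, s, α) such that for every measurable h : ℝ^d → ℂ with finite left-hand side, (1/4) ∬_{ℝ^d×ℝ^d} |h(v) − h(v')|² (M(v) + M(v')) / |v − v'|^{d+2s} dv dv' ≥ λ ∫_{ℝ^d} |h(v) − Ph|² ⌊v⌉^{−β} M(v) dv, where Ph := ∫_{ℝ^d} h(v) ⌊v⌉^{−β} M(v) dv. -/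
open MeasureTheory Real Filter Topology intervalIntegral
open scoped InnerProductSpace

noncomputable section

/-- The velocity space `ℝ^d`. -/
abbrev Vs (d : ℕ) := EuclideanSpace ℝ (Fin d)

/-- Japanese bracket `⌊v⌉ = √(1+|v|²)`. -/
def jb {d : ℕ} (v : Vs d) : ℝ := Real.sqrt (1 + ‖v‖ ^ 2)

/-- Normalisation constant `c_{α,β}`. -/
def cNorm (d : ℕ) (α β : ℝ) : ℝ := (∫ v : Vs d, jb v ^ (-(d : ℝ) - α - β))⁻¹

/-- Power-law equilibrium `M(v) = c_{α,β} ⌊v⌉^{-(d+α)}`. -/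
def Meq (d : ℕ) (α β : ℝ) (v : Vs d) : ℝ := cNorm d α β * jb v ^ (-(d : ℝ) - α)

/-- `M_β = ⌊·⌉^{-β} M`. -/
def Mbeta (d : ℕ) (α β : ℝ) (v : Vs d) : ℝ := jb v ^ (-β) * Meq d α β v

/-- Squared weighted norm `‖h‖_k² = ∫ (1+|v|²)^k |h|² M dv`. -/
def wnSq (d : ℕ) (α β k : ℝ) (h : Vs d → ℂ) : ℝ :=
  ∫ v : Vs d, (1 + ‖v‖ ^ 2) ^ k * ‖h v‖ ^ 2 * Meq d α β v

/-- Weighted norm `‖h‖_k = ‖(1+|·|²)^{k/2} h‖_{L²(M)}`. -/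
def wn (d : ℕ) (α β k : ℝ) (h : Vs d → ℂ) : ℝ := Real.sqrt (wnSq d α β k h)

/-- Projection `P h = ∫ h M_β dv`. -/
def Pavg (d : ℕ) (α β : ℝ) (h : Vs d → ℂ) : ℂ := ∫ v : Vs d, h v * (Mbeta d α β v : ℂ)

/-- Real part of the `L²(M)` scalar product `⟨f,g⟩`. -/
def reInnerM (d : ℕ) (α β : ℝ) (f g : Vs d → ℂ) : ℝ :=
  ∫ v : Vs d, (f v * (starRingEnd ℂ) (g v)).re * Meq d α β v

/-- The `L²(M)` scalar product `⟨f,g⟩`. -/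
def cInnerM (d : ℕ) (α β : ℝ) (f g : Vs d → ℂ) : ℂ :=
  ∫ v : Vs d, f v * (starRingEnd ℂ) (g v) * (Meq d α β v : ℂ)

/-- Membership in `L²(⌊·⌉^{-β} M dv)`. -/
def MemL2w (d : ℕ) (α β : ℝ) (h : Vs d → ℂ) : Prop :=
  AEStronglyMeasurable h (volume : Measure (Vs d)) ∧
    Integrable (fun v : Vs d => ‖h v‖ ^ 2 * jb v ^ (-β) * Meq d α β v)

/-- The scaling function `Θ(η)`. -/
def ThetaFn (α β η : ℝ) : ℝ :=
  if 2 + β < α then η ^ 2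
  else if α = 2 + β then η ^ 2 * |Real.log η|
  else η ^ ((α + β) / (1 + β))

/-- Weighted coercivity (spectral gap) hypothesis. -/
def Coercive (d : ℕ) (α β lam : ℝ) (L : (Vs d → ℂ) → Vs d → ℂ) : Prop :=
  ∀ h : Vs d → ℂ,
    lam * wnSq d α β (-β) (fun v => h v - Pavg d α β h) ≤ - reInnerM d α β (L h) h

/-- Amplitude of collisions at large velocities hypothesis. -/
def LargeV (d : ℕ) (α β : ℝ) (L : (Vs d → ℂ) → Vs d → ℂ) : Prop :=
  ∀ χ : Vs d → ℝ, ContDiff ℝ (⊤ : ℕ∞) χ → (∀ v, 0 ≤ χ v) → (∀ v, χ v ≤ 1) →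
    (∀ v, ‖v‖ ≤ 1 → χ v = 1) → (∀ v, 2 ≤ ‖v‖ → χ v = 0) →
    ∃ C > 0, ∀ R : ℝ, 1 ≤ R →
      wn d α β β (L (fun w => ((χ (R⁻¹ • w) : ℝ) : ℂ))) ≤ C * R ^ (-((α + β) / 2))

/-- `L` commutes with rotations in `v`. -/
def CommutesWithRotations (d : ℕ) (L : (Vs d → ℂ) → Vs d → ℂ) : Prop :=
  ∀ (O : Vs d ≃ₗᵢ[ℝ] Vs d) (f : Vs d → ℂ), L (fun v => f (O v)) = fun v => L f (O v)

/-- The fluid-mode eigenequation `-L*φ - iη(v·σ)φ = μ ⌊v⌉^{-β} φ`. -/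
def FluidEq (d : ℕ) (β : ℝ) (Lstar : (Vs d → ℂ) → Vs d → ℂ) (η : ℝ) (σ : Vs d)
    (φ : Vs d → ℂ) (μ : ℂ) : Prop :=
  ∀ v : Vs d, -(Lstar φ v) - Complex.I * (η : ℂ) * ((⟪v, σ⟫_ℝ : ℝ) : ℂ) * φ v
      = μ * ((jb v ^ (-β) : ℝ) : ℂ) * φ v

/-- `|u|_η = (η^{2/(1+β)} + |u|²)^{1/2}`. -/
def uabsEta (β η : ℝ) {d : ℕ} (u : Vs d) : ℝ := Real.sqrt (η ^ ((2 : ℝ) / (1 + β)) + ‖u‖ ^ 2)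

/-- Rescaled fluid mode `Φ_η(u) = φ_η(η^{-1/(1+β)} u)`. -/
def rescMode (β : ℝ) {d : ℕ} (φ : Vs d → ℂ) (η : ℝ) (u : Vs d) : ℂ :=
  φ ((η ^ (-(1 : ℝ) / (1 + β))) • u)

/-- Diffusion exponent `ζ`. -/
def zetaExp (α β : ℝ) : ℝ := if 2 + β ≤ α then 2 else (α + β) / (1 + β)

/-- Scaling function `θ(ε)`. -/
def thetaFn (α β ε : ℝ) : ℝ :=
  if α = 2 + β then ε ^ 2 * |Real.log ε|
  else if α = 0 then ε ^ (β / (1 + β)) / |Real.log ε|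
  else ε ^ zetaExp α β

/-- Laplacian of a real-valued function on `ℝ^d`. -/
def laplR {d : ℕ} (f : Vs d → ℝ) (v : Vs d) : ℝ :=
  ∑ i : Fin d,
    fderiv ℝ (fun w => fderiv ℝ f w (EuclideanSpace.single i 1)) v (EuclideanSpace.single i 1)

/-- Laplacian of a complex-valued function on `ℝ^d`. -/
def laplC {d : ℕ} (f : Vs d → ℂ) (v : Vs d) : ℂ :=
  ∑ i : Fin d,
    fderiv ℝ (fun w => fderiv ℝ f w (EuclideanSpace.single i 1)) v (EuclideanSpace.single i 1)

/-- Spatial Fourier transform. -/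
def FTr {d : ℕ} (g : Vs d → ℂ) (ξ : Vs d) : ℂ :=
  ∫ x : Vs d, Complex.exp (((-(2 * Real.pi * ⟪x, ξ⟫_ℝ)) : ℝ) * Complex.I) * g x

/-- Squared norm `‖m(∇_x) g‖²_{H^{-ζ}_x L²_v(M_β)}`. -/
def mixSq (d : ℕ) (α β ζ : ℝ) (m : Vs d → ℝ) (g : Vs d → Vs d → ℂ) : ℝ :=
  ∫ ξ : Vs d, ∫ v : Vs d,
    (1 + ‖ξ‖ ^ 2) ^ (-ζ) * (m ξ) ^ 2 * ‖FTr (fun x => g x v) ξ‖ ^ 2 * Mbeta d α β v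

/-- Squared weighted `L²_{x,v}(M)` norm. -/
def xvNormSq (d : ℕ) (α β k : ℝ) (g : Vs d → Vs d → ℂ) : ℝ :=
  ∫ x : Vs d, ∫ v : Vs d, (1 + ‖v‖ ^ 2) ^ k * ‖g x v‖ ^ 2 * Meq d α β v

/-- Surface measure on the unit sphere of `ℝ^d`. -/
def sphMeasure (d : ℕ) : Measure (Metric.sphere (0 : Vs d) 1) :=
  (volume : Measure (Vs d)).toSphere

/-- `|S^{d-1}|`. -/
def sphArea (d : ℕ) : ℝ := (sphMeasure d Set.univ).toReal

/-!
Every value `h v'` of `h` is a competitor for the mean of `h` in the variance with respect to the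
probability measure `M_β dv`, so the variance is at most `∫ ‖h v - h v'‖² M_β(v) dv`. Averaging over
`v'` in the unit ball leaves a double integral over the strip `ℝ^d × B(0, 1)`. On this strip
`M(v')` is bounded below and `|v - v'| ≤ 2⌊v⌉`, hence
`(M(v) + M(v')) |v - v'|^{-d-2s} ≳ c_{α,β} ⌊v⌉^{-d-2s} ≥ M_β(v)`, where the last step uses
`2s ≤ α + β`.
-/

section MeanSquareDeviation

variable {X H : Type*} [MeasurableSpace X] [NormedAddCommGroup H] [InnerProductSpace ℝ H]
  [CompleteSpace H]

theorem integral_norm_sub_const_sq {ν : Measure X} [IsProbabilityMeasure ν] {h : X → H}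
    (hh : MemLp h 2 ν) (a : H) :
    ∫ x, ‖h x - a‖ ^ 2 ∂ν = ∫ x, ‖h x - ∫ y, h y ∂ν‖ ^ 2 ∂ν + ‖(∫ y, h y ∂ν) - a‖ ^ 2 := by
  set m := ∫ y, h y ∂ν
  have hdev : MemLp (fun x ↦ h x - m) 2 ν := hh.sub (memLp_const m)
  have hint : Integrable (fun x ↦ h x - m) ν := hdev.integrable one_le_two
  have hcenter : ∫ x, (h x - m) ∂ν = 0 := by
    rw [MeasureTheory.integral_sub (hh.integrable one_le_two) (integrable_const m)]
    simp [m]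
  have hcross : ∫ x, ⟪m - a, h x - m⟫_ℝ ∂ν = 0 := by
    rw [integral_inner hint, hcenter, inner_zero_right]
  have hsq : Integrable (fun x ↦ ‖h x - m‖ ^ 2) ν := hdev.integrable_norm_pow two_ne_zero
  have hinner : Integrable (fun x ↦ 2 * ⟪m - a, h x - m⟫_ℝ) ν :=
    (hint.const_inner (m - a)).const_mul 2
  calc ∫ x, ‖h x - a‖ ^ 2 ∂ν
      = ∫ x, (‖h x - m‖ ^ 2 + 2 * ⟪m - a, h x - m⟫_ℝ + ‖m - a‖ ^ 2) ∂ν := by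
        congr with x
        rw [← sub_add_sub_cancel (h x) m a, norm_add_sq_real, real_inner_comm]
    _ = ∫ x, ‖h x - m‖ ^ 2 ∂ν + ‖m - a‖ ^ 2 := by
        rw [MeasureTheory.integral_add (by exact hsq.add hinner) (integrable_const _),
          MeasureTheory.integral_add hsq hinner, MeasureTheory.integral_const_mul, hcross]
        simp

theorem integral_norm_sub_integral_sq_le {ν : Measure X} [IsProbabilityMeasure ν] {h : X → H}
    (hm : AEStronglyMeasurable h ν) {a : H} (ha : Integrable (fun x ↦ ‖h x - a‖ ^ 2) ν) :
    ∫ x, ‖h x - ∫ y, h y ∂ν‖ ^ 2 ∂ν ≤ ∫ x, ‖h x - a‖ ^ 2 ∂ν := by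
  have hdev : MemLp (fun x ↦ h x - a) 2 ν :=
    (memLp_two_iff_integrable_sq_norm (hm.sub aestronglyMeasurable_const)).2 ha
  have hh : MemLp h 2 ν := by simpa [Pi.add_def] using hdev.add (memLp_const a)
  rw [integral_norm_sub_const_sq hh a]
  exact le_add_of_nonneg_right (sq_nonneg _)

theorem measureReal_univ_mul_integral_norm_sub_integral_sq_le {ν ρ : Measure X}
    [IsProbabilityMeasure ν] [IsFiniteMeasure ρ] {h : X → H} (hm : AEStronglyMeasurable h ν)
    (hint : Integrable (fun p : X × X ↦ ‖h p.1 - h p.2‖ ^ 2) (ν.prod ρ)) :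
    ρ.real Set.univ * ∫ x, ‖h x - ∫ y, h y ∂ν‖ ^ 2 ∂ν ≤
      ∫ p : X × X, ‖h p.1 - h p.2‖ ^ 2 ∂(ν.prod ρ) := by
  calc ρ.real Set.univ * ∫ x, ‖h x - ∫ y, h y ∂ν‖ ^ 2 ∂ν
      = ∫ _, (∫ x, ‖h x - ∫ y, h y ∂ν‖ ^ 2 ∂ν) ∂ρ := by
        rw [MeasureTheory.integral_const, smul_eq_mul]
    _ ≤ ∫ x', ∫ x, ‖h x - h x'‖ ^ 2 ∂ν ∂ρ := by
        refine integral_mono_ae (integrable_const _) hint.integral_prod_right ?_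
        filter_upwards [hint.prod_left_ae] with x' hx'
        exact integral_norm_sub_integral_sq_le hm hx'
    _ = ∫ p : X × X, ‖h p.1 - h p.2‖ ^ 2 ∂(ν.prod ρ) := (integral_prod_symm _ hint).symm

end MeanSquareDeviation

section JapaneseBracket

variable {d : ℕ}

theorem one_le_jb (v : Vs d) : 1 ≤ jb v :=
  Real.one_le_sqrt.2 (le_add_of_nonneg_right (sq_nonneg _))

theorem jb_pos (v : Vs d) : 0 < jb v := one_pos.trans_le (one_le_jb v)

theorem norm_le_jb (v : Vs d) : ‖v‖ ≤ jb v :=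
  Real.le_sqrt_of_sq_le (le_add_of_nonneg_left zero_le_one)

theorem jb_le_one_add_norm (v : Vs d) : jb v ≤ 1 + ‖v‖ := sqrt_one_add_norm_sq_le v

theorem continuous_jb : Continuous (jb : Vs d → ℝ) := by
  unfold jb
  fun_prop

theorem integrable_jb_rpow {r : ℝ} (hr : r < -d) : Integrable (fun v : Vs d ↦ jb v ^ r) := by
  have h : Integrable (fun v : Vs d ↦ (1 + ‖v‖ ^ 2) ^ (-(-r) / 2)) :=
    integrable_rpow_neg_one_add_norm_sq (by simpa using lt_neg_of_lt_neg hr)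
  refine h.congr (.of_forall fun v ↦ ?_)
  simp only [jb, neg_neg, Real.sqrt_eq_rpow]
  rw [← Real.rpow_mul (by positivity), one_div_mul_eq_div]

theorem integral_jb_rpow_pos {r : ℝ} (hr : r < -d) : 0 < ∫ v : Vs d, jb v ^ r :=
  integral_pos_of_integrable_nonneg_nonzero (x := 0)
    (continuous_jb.rpow_const fun v ↦ .inl (jb_pos v).ne') (integrable_jb_rpow hr)
    (fun v ↦ (Real.rpow_pos_of_pos (jb_pos v) r).le) (Real.rpow_pos_of_pos (jb_pos 0) r).ne'

theorem two_rpow_neg_abs_le_jb_rpow {v : Vs d} (hv : ‖v‖ ≤ 1) (r : ℝ) :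
    (2 : ℝ) ^ (-|r|) ≤ jb v ^ r :=
  calc (2 : ℝ) ^ (-|r|) ≤ jb v ^ (-|r|) :=
        Real.rpow_le_rpow_of_nonpos (jb_pos v) (by linarith [jb_le_one_add_norm v])
          (neg_nonpos.2 (abs_nonneg r))
    _ ≤ jb v ^ r := Real.rpow_le_rpow_of_exponent_le (one_le_jb v) (neg_abs_le r)

theorem two_mul_jb_rpow_le_norm_sub_rpow {v v' : Vs d} (hv' : ‖v'‖ ≤ 1) (hne : v ≠ v') {r : ℝ}
    (hr : r ≤ 0) : (2 * jb v) ^ r ≤ ‖v - v'‖ ^ r := by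
  have hle : ‖v - v'‖ ≤ 2 * jb v := by
    linarith [norm_sub_le v v', norm_le_jb v, one_le_jb v]
  exact Real.rpow_le_rpow_of_nonpos (norm_sub_pos_iff.2 hne) hle hr

end JapaneseBracket

section Equilibrium

variable {d : ℕ} {α β : ℝ}

theorem cNorm_nonneg : 0 ≤ cNorm d α β :=
  inv_nonneg.2 (integral_nonneg fun v ↦ Real.rpow_nonneg (jb_pos v).le _)

theorem Meq_nonneg (v : Vs d) : 0 ≤ Meq d α β v :=
  mul_nonneg cNorm_nonneg (Real.rpow_nonneg (jb_pos v).le _)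

theorem Mbeta_nonneg (v : Vs d) : 0 ≤ Mbeta d α β v :=
  mul_nonneg (Real.rpow_nonneg (jb_pos v).le _) (Meq_nonneg v)

@[fun_prop]
theorem measurable_Mbeta : Measurable (Mbeta d α β) := by
  have := (continuous_jb (d := d)).measurable
  unfold Mbeta Meq
  fun_prop

theorem Mbeta_eq_cNorm_mul_jb_rpow (v : Vs d) :
    Mbeta d α β v = cNorm d α β * jb v ^ (-(d : ℝ) - α - β) := by
  rw [Mbeta, Meq, mul_left_comm, ← Real.rpow_add (jb_pos v), neg_add_eq_sub]

theorem integrable_Mbeta (hαβ : 0 < α + β) : Integrable (Mbeta d α β) := by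
  simp only [funext Mbeta_eq_cNorm_mul_jb_rpow]
  exact (integrable_jb_rpow (by linarith)).const_mul _

theorem integral_Mbeta (hαβ : 0 < α + β) : ∫ v, Mbeta d α β v = 1 := by
  simp only [Mbeta_eq_cNorm_mul_jb_rpow, MeasureTheory.integral_const_mul]
  exact inv_mul_cancel₀ (integral_jb_rpow_pos (by linarith)).ne'

theorem Pavg_eq_integral_smul (h : Vs d → ℂ) : Pavg d α β h = ∫ v, Mbeta d α β v • h v := by
  simp only [Pavg, Complex.real_smul, mul_comm]

/-- The measure `M_β(v) dv`, with respect to which `Pavg` is the mean. It is a probability measure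
when `α + β > 0`. -/
def equilibriumMeasure (d : ℕ) (α β : ℝ) : Measure (Vs d) :=
  volume.withDensity fun v ↦ ENNReal.ofReal (Mbeta d α β v)

theorem isProbabilityMeasure_equilibriumMeasure (hαβ : 0 < α + β) :
    IsProbabilityMeasure (equilibriumMeasure d α β) := by
  refine ⟨?_⟩
  rw [equilibriumMeasure, withDensity_apply _ .univ, setLIntegral_univ,
    ← ofReal_integral_eq_lintegral_ofReal (integrable_Mbeta hαβ) (.of_forall Mbeta_nonneg),
    integral_Mbeta hαβ, ENNReal.ofReal_one]

theorem equilibriumMeasure_absolutelyContinuous :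
    equilibriumMeasure d α β ≪ (volume : Measure (Vs d)) :=
  withDensity_absolutelyContinuous _ _

theorem integral_equilibriumMeasure {E : Type*} [NormedAddCommGroup E] [NormedSpace ℝ E]
    (f : Vs d → E) :
    ∫ v, f v ∂equilibriumMeasure d α β = ∫ v, Mbeta d α β v • f v := by
  rw [equilibriumMeasure, integral_withDensity_eq_integral_toReal_smul (by fun_prop) (by simp)]
  simp only [ENNReal.toReal_ofReal (Mbeta_nonneg _)]

theorem equilibriumMeasure_prod_restrict (B : Set (Vs d)) :
    (equilibriumMeasure d α β).prod (volume.restrict B) =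
      (volume.restrict (Set.univ ×ˢ B)).withDensity
        fun p : Vs d × Vs d ↦ ENNReal.ofReal (Mbeta d α β p.1) := by
  rw [equilibriumMeasure, prod_withDensity_left (by fun_prop), Measure.volume_eq_prod,
    ← Measure.prod_restrict, Measure.restrict_univ]

end Equilibrium

section Energy

variable {d : ℕ} {α β s : ℝ} {H : Type*} [NormedAddCommGroup H]

/-- The integrand `‖h(v) - h(v')‖² (M(v) + M(v')) |v - v'|^{-d-2s}` of the Gagliardo form, at
`p = (v, v')`. -/
def energyDensity (d : ℕ) (α β s : ℝ) (h : Vs d → H) (p : Vs d × Vs d) : ℝ :=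
  ‖h p.1 - h p.2‖ ^ 2 * (Meq d α β p.1 + Meq d α β p.2) * ‖p.1 - p.2‖ ^ (-(d : ℝ) - 2 * s)

/-- The constant `κ` of the lower bound `κ M_β(v) ≤ (M(v) + M(v')) |v - v'|^{-d-2s}` for `|v'| ≤ 1`:
the first factor bounds `⌊v'⌉^{-d-α}` from below, the second comes from `|v - v'| ≤ 2⌊v⌉`. -/
def minorizationConst (d : ℕ) (α s : ℝ) : ℝ :=
  2 ^ (-|-(d : ℝ) - α|) * 2 ^ (-(d : ℝ) - 2 * s)

theorem minorizationConst_pos : 0 < minorizationConst d α s := by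
  unfold minorizationConst
  positivity

theorem energyDensity_nonneg (h : Vs d → H) (p : Vs d × Vs d) :
    0 ≤ energyDensity d α β s h p :=
  mul_nonneg (mul_nonneg (sq_nonneg _) (add_nonneg (Meq_nonneg _) (Meq_nonneg _)))
    (Real.rpow_nonneg (norm_nonneg _) _)

theorem minorizationConst_mul_Mbeta_le (hs : 0 ≤ s) (hαβ : 2 * s ≤ α + β) {v v' : Vs d}
    (hv' : ‖v'‖ ≤ 1) (hne : v ≠ v') :
    minorizationConst d α s * Mbeta d α β v ≤
      (Meq d α β v + Meq d α β v') * ‖v - v'‖ ^ (-(d : ℝ) - 2 * s) := by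
  have hMeq : cNorm d α β * 2 ^ (-|-(d : ℝ) - α|) ≤ Meq d α β v' :=
    mul_le_mul_of_nonneg_left (two_rpow_neg_abs_le_jb_rpow hv' _) cNorm_nonneg
  have hexp : jb v ^ (-(d : ℝ) - α - β) ≤ jb v ^ (-(d : ℝ) - 2 * s) :=
    Real.rpow_le_rpow_of_exponent_le (one_le_jb v) (by linarith)
  have hdist : (2 * jb v) ^ (-(d : ℝ) - 2 * s) ≤ ‖v - v'‖ ^ (-(d : ℝ) - 2 * s) :=
    two_mul_jb_rpow_le_norm_sub_rpow hv' hne (by linarith [Nat.cast_nonneg (α := ℝ) d])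
  calc minorizationConst d α s * Mbeta d α β v
      = cNorm d α β * 2 ^ (-|-(d : ℝ) - α|) *
          (2 ^ (-(d : ℝ) - 2 * s) * jb v ^ (-(d : ℝ) - α - β)) := by
        rw [minorizationConst, Mbeta_eq_cNorm_mul_jb_rpow]
        ring
    _ ≤ Meq d α β v' * (2 ^ (-(d : ℝ) - 2 * s) * jb v ^ (-(d : ℝ) - 2 * s)) := by
        have := Meq_nonneg (α := α) (β := β) v'
        have := jb_pos v
        gcongr
    _ = Meq d α β v' * (2 * jb v) ^ (-(d : ℝ) - 2 * s) := by
        rw [Real.mul_rpow zero_le_two (jb_pos v).le]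
    _ ≤ (Meq d α β v + Meq d α β v') * ‖v - v'‖ ^ (-(d : ℝ) - 2 * s) :=
        mul_le_mul (le_add_of_nonneg_left (Meq_nonneg v)) hdist
          (Real.rpow_nonneg (mul_pos two_pos (jb_pos v)).le _)
          (add_nonneg (Meq_nonneg v) (Meq_nonneg v'))

theorem Mbeta_mul_norm_sub_sq_le (hs : 0 ≤ s) (hαβ : 2 * s ≤ α + β) (h : Vs d → H)
    {p : Vs d × Vs d} (hp : ‖p.2‖ ≤ 1) :
    Mbeta d α β p.1 * ‖h p.1 - h p.2‖ ^ 2 ≤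
      (minorizationConst d α s)⁻¹ * energyDensity d α β s h p := by
  rw [le_inv_mul_iff₀ minorizationConst_pos]
  obtain heq | hne := eq_or_ne p.1 p.2
  · simp [heq, energyDensity]
  · calc minorizationConst d α s * (Mbeta d α β p.1 * ‖h p.1 - h p.2‖ ^ 2)
        = ‖h p.1 - h p.2‖ ^ 2 * (minorizationConst d α s * Mbeta d α β p.1) := by ring
      _ ≤ ‖h p.1 - h p.2‖ ^ 2 *
          ((Meq d α β p.1 + Meq d α β p.2) * ‖p.1 - p.2‖ ^ (-(d : ℝ) - 2 * s)) :=
        mul_le_mul_of_nonneg_left (minorizationConst_mul_Mbeta_le hs hαβ hp hne) (sq_nonneg _)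
      _ = energyDensity d α β s h p := (mul_assoc _ _ _).symm

theorem integrableOn_Mbeta_mul_norm_sub_sq (hs : 0 ≤ s) (hαβ : 2 * s ≤ α + β) {h : Vs d → H}
    (hm : AEStronglyMeasurable h) (hE : Integrable (energyDensity d α β s h)) :
    IntegrableOn (fun p : Vs d × Vs d ↦ Mbeta d α β p.1 * ‖h p.1 - h p.2‖ ^ 2)
      (Set.univ ×ˢ Metric.closedBall 0 1) := by
  have hmeas : AEStronglyMeasurable
      (fun p : Vs d × Vs d ↦ Mbeta d α β p.1 * ‖h p.1 - h p.2‖ ^ 2) :=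
    (measurable_Mbeta.comp measurable_fst).aestronglyMeasurable.mul
      ((hm.comp_fst.sub hm.comp_snd).norm.pow 2)
  refine (hE.const_mul (minorizationConst d α s)⁻¹).integrableOn.mono' hmeas.restrict ?_
  filter_upwards [ae_restrict_mem (MeasurableSet.univ.prod measurableSet_closedBall)] with p hp
  rw [Real.norm_of_nonneg (mul_nonneg (Mbeta_nonneg _) (sq_nonneg _))]
  exact Mbeta_mul_norm_sub_sq_le hs hαβ h (mem_closedBall_zero_iff.1 hp.2)

theorem integrable_norm_sub_sq_equilibriumMeasure_prod (hs : 0 ≤ s) (hαβ : 2 * s ≤ α + β)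
    {h : Vs d → H} (hm : AEStronglyMeasurable h) (hE : Integrable (energyDensity d α β s h)) :
    Integrable (fun p : Vs d × Vs d ↦ ‖h p.1 - h p.2‖ ^ 2)
      ((equilibriumMeasure d α β).prod (volume.restrict (Metric.closedBall 0 1))) := by
  rw [equilibriumMeasure_prod_restrict,
    integrable_withDensity_iff_integrable_smul' (by fun_prop) (by simp)]
  simpa only [ENNReal.toReal_ofReal (Mbeta_nonneg _), smul_eq_mul, IntegrableOn] using
    integrableOn_Mbeta_mul_norm_sub_sq hs hαβ hm hE

theorem integral_norm_sub_sq_equilibriumMeasure_prod_le (hs : 0 ≤ s) (hαβ : 2 * s ≤ α + β)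
    {h : Vs d → H} (hm : AEStronglyMeasurable h) (hE : Integrable (energyDensity d α β s h)) :
    ∫ p : Vs d × Vs d, ‖h p.1 - h p.2‖ ^ 2
        ∂(equilibriumMeasure d α β).prod (volume.restrict (Metric.closedBall 0 1)) ≤
      (minorizationConst d α s)⁻¹ * ∫ p, energyDensity d α β s h p := by
  rw [equilibriumMeasure_prod_restrict,
    integral_withDensity_eq_integral_toReal_smul (by fun_prop) (by simp)]
  simp only [ENNReal.toReal_ofReal (Mbeta_nonneg _), smul_eq_mul]
  calc ∫ p in Set.univ ×ˢ Metric.closedBall 0 1, Mbeta d α β p.1 * ‖h p.1 - h p.2‖ ^ 2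
      ≤ ∫ p in Set.univ ×ˢ Metric.closedBall 0 1,
          (minorizationConst d α s)⁻¹ * energyDensity d α β s h p :=
        setIntegral_mono_on (integrableOn_Mbeta_mul_norm_sub_sq hs hαβ hm hE)
          (hE.const_mul _).integrableOn (MeasurableSet.univ.prod measurableSet_closedBall)
          fun p hp ↦ Mbeta_mul_norm_sub_sq_le hs hαβ h (mem_closedBall_zero_iff.1 hp.2)
    _ ≤ ∫ p, (minorizationConst d α s)⁻¹ * energyDensity d α β s h p :=
        setIntegral_le_integral (hE.const_mul _) (.of_forall fun p ↦
          mul_nonneg (inv_nonneg.2 minorizationConst_pos.le) (energyDensity_nonneg h p))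
    _ = (minorizationConst d α s)⁻¹ * ∫ p, energyDensity d α β s h p :=
        MeasureTheory.integral_const_mul _ _

theorem minorizationConst_mul_integral_norm_sub_integral_sq_le [InnerProductSpace ℝ H]
    [CompleteSpace H] (hs : 0 < s) (hαβ : 2 * s ≤ α + β) {h : Vs d → H}
    (hm : AEStronglyMeasurable h) (hE : Integrable (energyDensity d α β s h)) :
    minorizationConst d α s * (volume.real (Metric.closedBall (0 : Vs d) 1) *
      ∫ v, ‖h v - ∫ u, h u ∂equilibriumMeasure d α β‖ ^ 2 ∂equilibriumMeasure d α β) ≤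
      ∫ p, energyDensity d α β s h p := by
  have := isProbabilityMeasure_equilibriumMeasure (d := d) (show 0 < α + β by linarith)
  have : IsFiniteMeasure (volume.restrict (Metric.closedBall (0 : Vs d) 1)) :=
    isFiniteMeasure_restrict.2 measure_closedBall_lt_top.ne
  have hvar := measureReal_univ_mul_integral_norm_sub_integral_sq_le
    (hm.mono_ac equilibriumMeasure_absolutelyContinuous)
    (integrable_norm_sub_sq_equilibriumMeasure_prod hs.le hαβ hm hE)
  rw [measureReal_restrict_apply_univ] at hvar
  rw [← le_inv_mul_iff₀ minorizationConst_pos]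
  exact hvar.trans (integral_norm_sub_sq_equilibriumMeasure_prod_le hs.le hαβ hm hE)

end Energy

theorem fractional_hardy_poincare_general (d : ℕ) {s α β : ℝ} (hs : 0 < s) (hαβ : 2 * s ≤ α + β)
    (H : Type*) [NormedAddCommGroup H] [InnerProductSpace ℝ H] [CompleteSpace H] :
    ∃ lam > (0 : ℝ), ∀ h : Vs d → H, AEStronglyMeasurable h (volume : Measure (Vs d)) →
      Integrable (energyDensity d α β s h) →
      lam * ∫ v, ‖h v - ∫ u, Mbeta d α β u • h u‖ ^ 2 * Mbeta d α β v ≤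
        (1 / 4) * ∫ p, energyDensity d α β s h p := by
  have hball : 0 < volume.real (Metric.closedBall (0 : Vs d) 1) :=
    ENNReal.toReal_pos (Metric.measure_closedBall_pos _ _ one_pos).ne'
      measure_closedBall_lt_top.ne
  have hκ : 0 < minorizationConst d α s := minorizationConst_pos
  refine ⟨minorizationConst d α s * volume.real (Metric.closedBall (0 : Vs d) 1) / 4, by positivity,
    fun h hm hE ↦ ?_⟩
  have hvar := minorizationConst_mul_integral_norm_sub_integral_sq_le hs hαβ hm hE
  simp only [integral_equilibriumMeasure, smul_eq_mul, mul_comm (Mbeta d α β _)] at hvar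
  linarith

/-- **Fractional Hardy–Poincaré inequality for Lévy–Fokker–Planck equilibria**
(Proposition 7.1 of the paper). -/
theorem fractional_hardy_poincare
    (d : ℕ) (hd : 1 ≤ d) (s α : ℝ) (hs0 : 0 < s) (hs1 : s < 1) (hα : s < α) :
    ∃ lam > (0 : ℝ), ∀ h : Vs d → ℂ,
      AEStronglyMeasurable h (volume : Measure (Vs d)) →
      Integrable (fun p : Vs d × Vs d =>
        ‖h p.1 - h p.2‖ ^ 2 * (Meq d α (2 * s - α) p.1 + Meq d α (2 * s - α) p.2) *
          ‖p.1 - p.2‖ ^ (-(d : ℝ) - 2 * s)) →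
      lam * (∫ v : Vs d,
          ‖h v - Pavg d α (2 * s - α) h‖ ^ 2 * jb v ^ (-(2 * s - α)) * Meq d α (2 * s - α) v)
        ≤ (1 / 4) * ∫ p : Vs d × Vs d,
            ‖h p.1 - h p.2‖ ^ 2 * (Meq d α (2 * s - α) p.1 + Meq d α (2 * s - α) p.2) *
              ‖p.1 - p.2‖ ^ (-(d : ℝ) - 2 * s) := by
  simp only [Pavg_eq_integral_smul, mul_assoc _ (jb _ ^ (_ : ℝ))]
  exact fractional_hardy_poincare_general d hs0 (add_sub_cancel α (2 * s)).ge ℂ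

end
end

section
/- Finiteness and positivity of the fractional diffusion coefficient integral for scattering models. Let d ≥ 1, ν₀ > 0, β ∈ ℝ, α ∈ (0, 2+β) with α + β > 0, and σ ∈ S^{d−1}. Then the integral ∫_{ℝ^d} [ν₀ |u|^β (u·σ)² / (ν₀² + |u|^{2β} (u·σ)²)] |u|^{−d−α} du is finite and strictly positive. -/
open MeasureTheory Real Filter Topology intervalIntegral
open scoped InnerProductSpace

noncomputable section

/-! With `s = |u|^β (u·σ)`, the integrand is `ν₀ |u|^(-β) · s² / (ν₀² + s²) · |u|^(-d-α)`.
Bounding the fraction by `s² / ν₀²` makes it `O(|u|^(2+β-d-α))`, locally integrable because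
`α < 2 + β`; bounding it by `1` makes it `O(|u|^(-β-d-α))`, integrable at infinity because
`α + β > 0`. The integrand is nonnegative and vanishes only on the hyperplane `u ⊥ σ`, whose
complement is open and nonempty. -/

theorem integral_pos_of_pos_on_isOpen {X : Type*} [TopologicalSpace X] [MeasurableSpace X]
    {μ : Measure X} [μ.IsOpenPosMeasure] {f : X → ℝ} {U : Set X} (hf : Integrable f μ)
    (hf_nonneg : 0 ≤ f) (hU : IsOpen U) (hU_nonempty : U.Nonempty) (hfU : ∀ x ∈ U, 0 < f x) :
    0 < ∫ x, f x ∂μ := by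
  rw [integral_pos_iff_support_of_nonneg hf_nonneg hf]
  exact (hU.measure_pos μ hU_nonempty).trans_le (measure_mono fun x hx => (hfU x hx).ne')

section PowerDecay

variable {E F : Type*} [NormedAddCommGroup E] [NormedAddCommGroup F]

theorem norm_rpow_neg_le_one_add_norm_rpow_neg {x : E} (hx : 1 ≤ ‖x‖) {r : ℝ} (hr : 0 ≤ r) :
    ‖x‖ ^ (-r) ≤ 2 ^ r * (1 + ‖x‖) ^ (-r) :=
  calc ‖x‖ ^ (-r) = 2 ^ r * (2 * ‖x‖) ^ (-r) := by
        rw [mul_rpow zero_le_two (norm_nonneg x), ← mul_assoc, ← rpow_add two_pos, add_neg_cancel,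
          rpow_zero, one_mul]
    _ ≤ 2 ^ r * (1 + ‖x‖) ^ (-r) := by
        gcongr 2 ^ r * ?_
        exact rpow_le_rpow_of_nonpos (by positivity) (by linarith) (neg_nonpos.mpr hr)

theorem isBigO_cobounded_norm_rpow_neg {r : ℝ} (hr : 0 ≤ r) :
    (fun x : E => ‖x‖ ^ (-r)) =O[Bornology.cobounded E] fun x => (1 + ‖x‖) ^ (-r) := by
  refine .of_bound (2 ^ r) ?_
  filter_upwards [eventually_cobounded_le_norm 1] with x hx
  rw [norm_of_nonneg (by positivity), norm_of_nonneg (by positivity)]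
  exact norm_rpow_neg_le_one_add_norm_rpow_neg hx hr

variable [NormedSpace ℝ E] [FiniteDimensional ℝ E] [Nontrivial E] [MeasurableSpace E]
  [BorelSpace E] {μ : Measure E} [μ.IsAddHaarMeasure]

theorem integrable_of_norm_le_rpow_of_isBigO_cobounded {f : E → F} {C a b : ℝ}
    (hf : AEStronglyMeasurable f μ)
    (ha : a < Module.finrank ℝ E) (hfa : ∀ᵐ x ∂μ, ‖f x‖ ≤ C * ‖x‖ ^ (-a))
    (hb : Module.finrank ℝ E < b)
    (hfb : f =O[Bornology.cobounded E] fun x => ‖x‖ ^ (-b)) :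
    Integrable f μ := by
  have hloc : LocallyIntegrable f μ :=
    locallyIntegrable_of_norm_le_rpow Module.finrank_pos ha hfa hf
  have hb_nonneg : 0 ≤ b := (Nat.cast_nonneg _).trans hb.le
  have hdecay : f =O[cocompact E] fun x => (1 + ‖x‖) ^ (-b) := by
    rw [← Metric.cobounded_eq_cocompact]
    exact hfb.trans (isBigO_cobounded_norm_rpow_neg hb_nonneg)
  exact hloc.integrable_of_isBigO_cocompact hdecay
    ((integrable_one_add_norm hb).integrableAtFilter _)

end PowerDecay

section FluidMode

variable {E : Type*} [NormedAddCommGroup E] [InnerProductSpace ℝ E]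

theorem norm_pos_of_inner_ne_zero {u v : E} (h : ⟪u, v⟫_ℝ ≠ 0) : 0 < ‖u‖ :=
  norm_pos_iff.mpr fun hu => h (by rw [hu, inner_zero_left])

/-- The density `(u·σ) Im Φ(u)`, where `Φ(u) = ν₀ / (ν₀ - i |u|^β (u·σ))` is the limit of the
rescaled fluid modes, written as a real fraction. Integrating it against `|u|^(-d-α) du` gives the
fractional diffusion coefficient, up to normalization. -/
def fluidModeFlux (ν₀ β : ℝ) (σ u : E) : ℝ :=
  ν₀ * ‖u‖ ^ β * ⟪u, σ⟫_ℝ ^ 2 / (ν₀ ^ 2 + ‖u‖ ^ (2 * β) * ⟪u, σ⟫_ℝ ^ 2)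

variable {ν₀ β α : ℝ} {σ : E}

theorem fluidModeFlux_nonneg (hν₀ : 0 ≤ ν₀) (u : E) : 0 ≤ fluidModeFlux ν₀ β σ u := by
  unfold fluidModeFlux
  positivity

theorem fluidModeFlux_pos (hν₀ : 0 < ν₀) {u : E} (hu : ⟪u, σ⟫_ℝ ≠ 0) :
    0 < fluidModeFlux ν₀ β σ u := by
  have hu_norm : 0 < ‖u‖ := norm_pos_of_inner_ne_zero hu
  unfold fluidModeFlux
  positivity

theorem fluidModeFlux_le_rpow_two_add (hν₀ : 0 < ν₀) (u : E) :
    fluidModeFlux ν₀ β σ u ≤ ν₀⁻¹ * ‖σ‖ ^ 2 * ‖u‖ ^ (2 + β) := by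
  have hinner : ⟪u, σ⟫_ℝ ^ 2 ≤ (‖u‖ * ‖σ‖) ^ 2 :=
    sq_le_sq.mpr ((abs_real_inner_le_norm u σ).trans (le_abs_self _))
  calc fluidModeFlux ν₀ β σ u ≤ ν₀ * ‖u‖ ^ β * ⟪u, σ⟫_ℝ ^ 2 / ν₀ ^ 2 := by
        unfold fluidModeFlux
        gcongr
        exact le_add_of_nonneg_right (by positivity)
    _ ≤ ν₀ * ‖u‖ ^ β * (‖u‖ * ‖σ‖) ^ 2 / ν₀ ^ 2 := by gcongr
    _ = ν₀⁻¹ * ‖σ‖ ^ 2 * (‖u‖ ^ (2 : ℝ) * ‖u‖ ^ β) := by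
        rw [rpow_two]
        field_simp
    _ ≤ ν₀⁻¹ * ‖σ‖ ^ 2 * ‖u‖ ^ (2 + β) := by
        gcongr
        exact le_rpow_add (norm_nonneg u) 2 β

theorem fluidModeFlux_le_rpow_neg (hν₀ : 0 ≤ ν₀) (u : E) :
    fluidModeFlux ν₀ β σ u ≤ ν₀ * ‖u‖ ^ (-β) := by
  rcases eq_or_ne ⟪u, σ⟫_ℝ 0 with hu | hu
  · rw [fluidModeFlux, hu]
    simpa using by positivity
  have hu_norm : 0 < ‖u‖ := norm_pos_of_inner_ne_zero hu
  calc fluidModeFlux ν₀ β σ u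
      ≤ ν₀ * ‖u‖ ^ β * ⟪u, σ⟫_ℝ ^ 2 / (‖u‖ ^ (2 * β) * ⟪u, σ⟫_ℝ ^ 2) := by
        unfold fluidModeFlux
        gcongr
        exact le_add_of_nonneg_left (sq_nonneg ν₀)
    _ = ν₀ * ‖u‖ ^ (-β) := by
        rw [two_mul, rpow_add hu_norm, rpow_neg hu_norm.le]
        field_simp

theorem measurable_fluidModeFlux [MeasurableSpace E] [OpensMeasurableSpace E]
    [SecondCountableTopology E] : Measurable (fluidModeFlux ν₀ β σ) := by
  unfold fluidModeFlux
  fun_prop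

variable [FiniteDimensional ℝ E] [MeasurableSpace E] [BorelSpace E]
  {μ : Measure E} [μ.IsAddHaarMeasure]

theorem integrable_fluidModeFlux_mul_norm_rpow [Nontrivial E] (hν₀ : 0 < ν₀)
    (hα : α < 2 + β) (hαβ : 0 < α + β) :
    Integrable (fun u => fluidModeFlux ν₀ β σ u * ‖u‖ ^ (-(Module.finrank ℝ E : ℝ) - α)) μ := by
  set d : ℝ := (Module.finrank ℝ E : ℝ)
  have hbound {C p : ℝ} (hC : 0 ≤ C) {u : E} (hu : fluidModeFlux ν₀ β σ u ≤ C * ‖u‖ ^ p) :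
      ‖fluidModeFlux ν₀ β σ u * ‖u‖ ^ (-d - α)‖ ≤ C * ‖u‖ ^ (-(d + α - p)) := by
    have hnonneg := fluidModeFlux_nonneg (β := β) (σ := σ) hν₀.le u
    rw [norm_of_nonneg (by positivity)]
    calc fluidModeFlux ν₀ β σ u * ‖u‖ ^ (-d - α)
        ≤ C * (‖u‖ ^ p * ‖u‖ ^ (-d - α)) := by rw [← mul_assoc]; gcongr
      _ ≤ C * ‖u‖ ^ (p + (-d - α)) := by gcongr; exact le_rpow_add (norm_nonneg u) _ _
      _ = C * ‖u‖ ^ (-(d + α - p)) := by ring_nf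
  refine integrable_of_norm_le_rpow_of_isBigO_cobounded (a := d + α - (2 + β)) (b := d + α - -β)
    (measurable_fluidModeFlux.mul (by fun_prop)).aestronglyMeasurable (by linarith)
    (.of_forall fun u => hbound (by positivity) (fluidModeFlux_le_rpow_two_add hν₀ u))
    (by linarith) ?_
  refine .of_bound ν₀ (.of_forall fun u => ?_)
  rw [norm_of_nonneg (by positivity : 0 ≤ ‖u‖ ^ (-(d + α - -β)))]
  exact hbound hν₀.le (fluidModeFlux_le_rpow_neg hν₀.le u)

theorem fractional_diffusion_integral_scattering_general (hν₀ : 0 < ν₀)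
    (hα : α < 2 + β) (hαβ : 0 < α + β) (hσ : σ ≠ 0) :
    Integrable (fun u => fluidModeFlux ν₀ β σ u * ‖u‖ ^ (-(Module.finrank ℝ E : ℝ) - α)) μ ∧
      0 < ∫ u, fluidModeFlux ν₀ β σ u * ‖u‖ ^ (-(Module.finrank ℝ E : ℝ) - α) ∂μ := by
  have : Nontrivial E := ⟨σ, 0, hσ⟩
  have hint := integrable_fluidModeFlux_mul_norm_rpow (σ := σ) (μ := μ) hν₀ hα hαβ
  have hopen : IsOpen {u : E | ⟪u, σ⟫_ℝ ≠ 0} := isOpen_ne_fun (by fun_prop) continuous_const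
  refine ⟨hint, integral_pos_of_pos_on_isOpen hint (fun u => ?_) hopen
    ⟨σ, inner_self_ne_zero.mpr hσ⟩ fun u hu => ?_⟩
  · exact mul_nonneg (fluidModeFlux_nonneg hν₀.le u) (by positivity)
  · have hu_norm : 0 < ‖u‖ := norm_pos_of_inner_ne_zero hu
    exact mul_pos (fluidModeFlux_pos hν₀ hu) (by positivity)

end FluidMode

/-- **Finiteness and positivity of the fractional diffusion coefficient integral
for scattering models** (Corollary 1.11 of the paper, case `α ∈ (0, 2+β)`). -/
theorem fractional_diffusion_integral_scattering
    (d : ℕ) (hd : 1 ≤ d) (ν₀ β α : ℝ) (hν₀ : 0 < ν₀)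
    (hα0 : 0 < α) (hα2 : α < 2 + β) (hαβ : 0 < α + β)
    (σ : Vs d) (hσ : ‖σ‖ = 1) :
    Integrable (fun u : Vs d =>
        ν₀ * ‖u‖ ^ β * ⟪u, σ⟫_ℝ ^ 2 / (ν₀ ^ 2 + ‖u‖ ^ (2 * β) * ⟪u, σ⟫_ℝ ^ 2) *
          ‖u‖ ^ (-(d : ℝ) - α))
      (volume : Measure (Vs d)) ∧
    0 < ∫ u : Vs d,
        ν₀ * ‖u‖ ^ β * ⟪u, σ⟫_ℝ ^ 2 / (ν₀ ^ 2 + ‖u‖ ^ (2 * β) * ⟪u, σ⟫_ℝ ^ 2) *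
          ‖u‖ ^ (-(d : ℝ) - α) := by
  have h := fractional_diffusion_integral_scattering_general (μ := volume) hν₀ hα2 hαβ
    (ne_zero_of_norm_ne_zero (hσ ▸ one_ne_zero) : σ ≠ 0)
  rwa [finrank_euclideanSpace_fin] at h

end
end

section
/- Finiteness and positivity of the rescaled mass for scattering models with infinite-mass equilibria. Let d ≥ 1, β > 0, α ∈ (−β, 0), ν₀ > 0, and σ ∈ S^{d−1}. Then the integral ∫_{ℝ^d} [ν₀² / (ν₀² + |u|^{2β} (u·σ)²)] |u|^{−d−α} du is finite and strictly positive. -/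
/-!
Put `t = |u|^β |u·σ| / |ν₀|`, so that the integrand is `|u|^(-d-α) / (1 + t²)`. On the unit ball it
is at most `|u|^(-d-α)`, which is integrable because `α < 0`. At infinity the inequality
`1 / (1 + t²) ≤ t^(-s)`, valid for `0 ≤ s ≤ 2`, bounds it by a multiple of
`|u·σ|^(-s) |u|^(-(d+α+sβ))`. The singularity on the hyperplane `u·σ = 0` is integrable when
`s < 1`, and the decay is sufficient when `d < s + (d+α+sβ)`, that is, `-α < s (1+β)`; such an `s`
exists since `0 < -α < 1+β`. Integrability of the bound follows from Tonelli's theorem: in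
orthonormal coordinates whose first axis is `σ`, distributing the power of `|u|` over the
coordinates dominates it by a product of integrable functions of one variable.
-/

open MeasureTheory Real Filter Topology intervalIntegral
open scoped InnerProductSpace

noncomputable section

lemma inv_one_add_sq_le_rpow_neg {t s : ℝ} (ht : 0 < t) (hs0 : 0 ≤ s) (hs2 : s ≤ 2) :
    (1 + t ^ 2)⁻¹ ≤ t ^ (-s) := by
  rw [Real.rpow_neg ht.le]
  refine inv_anti₀ (by positivity) ?_
  rcases le_total t 1 with h | h
  · have : t ^ s ≤ 1 := Real.rpow_le_one ht.le h hs0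
    nlinarith [sq_nonneg t]
  · have : t ^ s ≤ t ^ 2 := by
      simpa only [Real.rpow_two] using Real.rpow_le_rpow_of_exponent_le h hs2
    linarith

lemma rpow_neg_le_two_rpow_mul_one_add_rpow_neg {r p : ℝ} (hr : 1 ≤ r) (hp : 0 ≤ p) :
    r ^ (-p) ≤ 2 ^ p * (1 + r) ^ (-p) := by
  have hr0 : 0 < r := by linarith
  calc r ^ (-p) = 2 ^ p * (2 * r) ^ (-p) := by
        rw [Real.mul_rpow zero_le_two hr0.le, ← mul_assoc, ← Real.rpow_add two_pos, add_neg_cancel,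
          Real.rpow_zero, one_mul]
    _ ≤ 2 ^ p * (1 + r) ^ (-p) := by
        gcongr 2 ^ p * ?_
        exact Real.rpow_le_rpow_of_nonpos (by linarith) (by linarith) (by linarith)

section NormedSpace

variable {E : Type*} [NormedAddCommGroup E] [NormedSpace ℝ E] [FiniteDimensional ℝ E]
  [MeasurableSpace E] [BorelSpace E] (μ : Measure E) [μ.IsAddHaarMeasure]

lemma integrable_norm_rpow_neg_mul_one_add_norm_rpow_neg [Nontrivial E] {s q : ℝ}
    (hs : s < Module.finrank ℝ E) (hsq : Module.finrank ℝ E < s + q) :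
    Integrable (fun x : E => ‖x‖ ^ (-s) * (1 + ‖x‖) ^ (-q)) μ := by
  have hmeas : AEStronglyMeasurable (fun x : E => ‖x‖ ^ (-s) * (1 + ‖x‖) ^ (-q)) μ :=
    Measurable.aestronglyMeasurable (by fun_prop)
  have hball : IntegrableOn (fun x : E => ‖x‖ ^ (-s) * (1 + ‖x‖) ^ (-q)) (Metric.ball 0 1) μ := by
    refine integrableOn_ball_of_norm_le_rpow (C := 1) Module.finrank_pos hs
      (ae_of_all _ fun x => ?_) hmeas
    rw [Real.norm_of_nonneg (by positivity), one_mul]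
    refine mul_le_of_le_one_right (by positivity) ?_
    exact Real.rpow_le_one_of_one_le_of_nonpos (by linarith [norm_nonneg x]) (by linarith)
  have hcompl :
      IntegrableOn (fun x : E => ‖x‖ ^ (-s) * (1 + ‖x‖) ^ (-q)) (Metric.ball 0 1)ᶜ μ := by
    refine ((integrable_one_add_norm hsq).const_mul (2 ^ (s + q))).integrableOn.mono'
      hmeas.restrict (ae_restrict_of_forall_mem measurableSet_ball.compl fun x hx => ?_)
    have hx1 : 1 ≤ ‖x‖ := by simpa using hx
    rw [Real.norm_of_nonneg (by positivity)]
    calc ‖x‖ ^ (-s) * (1 + ‖x‖) ^ (-q)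
        ≤ ‖x‖ ^ (-s) * ‖x‖ ^ (-q) := by
          gcongr ‖x‖ ^ (-s) * ?_
          exact Real.rpow_le_rpow_of_nonpos (by linarith) (by linarith) (by linarith)
      _ = ‖x‖ ^ (-(s + q)) := by rw [← Real.rpow_add (by linarith), neg_add]
      _ ≤ 2 ^ (s + q) * (1 + ‖x‖) ^ (-(s + q)) :=
          rpow_neg_le_two_rpow_mul_one_add_rpow_neg hx1 (le_trans (by positivity) hsq.le)
  simpa only [Set.union_compl_self, integrableOn_univ] using hball.union hcompl

end NormedSpace

section InnerProductSpace

variable {E : Type*} [NormedAddCommGroup E] [InnerProductSpace ℝ E]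

lemma one_add_norm_rpow_neg_sum_le_prod {ι : Type*} [Fintype ι] (b : OrthonormalBasis ι ℝ E)
    {q : ι → ℝ} (hq : ∀ i, 0 ≤ q i) (u : E) :
    (1 + ‖u‖) ^ (-∑ i, q i) ≤ ∏ i, (1 + |⟪b i, u⟫_ℝ|) ^ (-q i) := by
  rw [← Finset.sum_neg_distrib, Real.rpow_sum_of_pos (by positivity)]
  refine Finset.prod_le_prod (fun i _ => by positivity) fun i _ => ?_
  have hcoord : |⟪b i, u⟫_ℝ| ≤ ‖u‖ := by
    simpa only [b.norm_eq_one, one_mul] using abs_real_inner_le_norm (b i) u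
  exact Real.rpow_le_rpow_of_nonpos (by positivity) (by linarith) (neg_nonpos.2 (hq i))

variable [FiniteDimensional ℝ E]

lemma exists_orthonormalBasis_smul_eq {σ : E} (hσ : σ ≠ 0) :
    ∃ (u : Finset E) (b : OrthonormalBasis u ℝ E) (i : u), ‖σ‖ • b i = σ := by
  have hunit : ‖‖σ‖⁻¹ • σ‖ = 1 := by simpa using norm_smul_inv_norm (𝕜 := ℝ) hσ
  have hortho : Orthonormal ℝ ((↑) : ({‖σ‖⁻¹ • σ} : Set E) → E) :=
    orthonormal_subsingleton_iff.2 fun i => by rw [i.2, hunit]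
  obtain ⟨u, b, hu, hb⟩ := hortho.exists_orthonormalBasis_extension
  refine ⟨u, b, ⟨‖σ‖⁻¹ • σ, hu rfl⟩, ?_⟩
  rw [hb, smul_inv_smul₀ (norm_ne_zero_iff.2 hσ)]

variable [MeasurableSpace E] [BorelSpace E]

lemma ae_inner_ne_zero (μ : Measure E) [μ.IsAddHaarMeasure] {σ : E} (hσ : σ ≠ 0) :
    ∀ᵐ u ∂μ, ⟪u, σ⟫_ℝ ≠ 0 := by
  have hproper : (ℝ ∙ σ)ᗮ ≠ ⊤ := by
    simpa only [ne_eq, Submodule.orthogonal_eq_top_iff, Submodule.span_singleton_eq_bot] using hσ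
  refine measure_mono_null (fun u hu => ?_) (Measure.addHaar_submodule μ _ hproper)
  exact Submodule.mem_orthogonal_singleton_iff_inner_left.2 (not_not.1 hu)

lemma integrable_prod_inner_orthonormalBasis {ι : Type*} [Fintype ι]
    (b : OrthonormalBasis ι ℝ E) {g : ι → ℝ → ℝ} (hg : ∀ i, Integrable (g i)) :
    Integrable (fun u : E => ∏ i, g i ⟪b i, u⟫_ℝ) := by
  have hcoord : MeasurePreserving fun u : E => (b.repr u).ofLp :=
    (PiLp.volume_preserving_ofLp ι).comp b.measurePreserving_repr
  simpa only [Function.comp_def, b.repr_apply_apply] using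
    hcoord.integrable_comp_of_integrable (Integrable.fintype_prod hg)

lemma integrable_abs_inner_orthonormalBasis_rpow_neg_mul_one_add_norm_rpow_neg
    {ι : Type*} [Fintype ι] (b : OrthonormalBasis ι ℝ E) (i₀ : ι) {s p : ℝ}
    (hs : s < 1) (hsp : Fintype.card ι < s + p) :
    Integrable (fun u : E => |⟪b i₀, u⟫_ℝ| ^ (-s) * (1 + ‖u‖) ^ (-p)) := by
  classical
  have hcard : (0 : ℝ) < Fintype.card ι := by exact_mod_cast Fintype.card_pos_iff.2 ⟨i₀⟩
  -- The excess decay `s + p - d` is shared equally among the `d` coordinates.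
  obtain ⟨δ, hδ, hp⟩ : ∃ δ > 0, p = Fintype.card ι * (1 + δ) - s :=
    ⟨(s + p - Fintype.card ι) / Fintype.card ι, div_pos (by linarith) hcard, by field_simp; ring⟩
  let q : ι → ℝ := fun i => 1 + δ - if i = i₀ then s else 0
  have hq : ∀ i, 0 ≤ q i := fun i => by
    simp only [q]; split_ifs <;> linarith
  have hqsum : ∑ i, q i = p := by
    simp only [q, hp, Finset.sum_sub_distrib, Finset.sum_const, Finset.card_univ,
      nsmul_eq_mul, Fintype.sum_ite_eq']
  let g : ι → ℝ → ℝ := fun i x => (if i = i₀ then |x| ^ (-s) else 1) * (1 + |x|) ^ (-q i)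
  have hg : ∀ i, Integrable (g i) := fun i => by
    by_cases hi : i = i₀
    · simpa [g, q, hi] using integrable_norm_rpow_neg_mul_one_add_norm_rpow_neg (E := ℝ) volume
        (s := s) (q := 1 + δ - s) (by simpa using hs) (by simpa using hδ)
    · simpa [g, q, hi] using integrable_one_add_norm (E := ℝ) (μ := volume) (r := 1 + δ)
        (by simpa using hδ)
  refine (integrable_prod_inner_orthonormalBasis b hg).mono'
    (Measurable.aestronglyMeasurable (by fun_prop)) (ae_of_all _ fun u => ?_)
  rw [Real.norm_of_nonneg (by positivity)]
  calc |⟪b i₀, u⟫_ℝ| ^ (-s) * (1 + ‖u‖) ^ (-p)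
      ≤ |⟪b i₀, u⟫_ℝ| ^ (-s) * ∏ i, (1 + |⟪b i, u⟫_ℝ|) ^ (-q i) := by
        rw [← hqsum]; gcongr; exact one_add_norm_rpow_neg_sum_le_prod b hq u
    _ = ∏ i, g i ⟪b i, u⟫_ℝ := by
        simp only [g, Finset.prod_mul_distrib, Fintype.prod_ite_eq']

lemma integrable_abs_inner_rpow_neg_mul_one_add_norm_rpow_neg {σ : E} (hσ : σ ≠ 0) {s p : ℝ}
    (hs : s < 1) (hsp : Module.finrank ℝ E < s + p) :
    Integrable (fun u : E => |⟪u, σ⟫_ℝ| ^ (-s) * (1 + ‖u‖) ^ (-p)) := by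
  obtain ⟨v, b, i₀, hb⟩ := exists_orthonormalBasis_smul_eq hσ
  have hinner (u : E) : |⟪u, σ⟫_ℝ| = ‖σ‖ * |⟪b i₀, u⟫_ℝ| := by
    conv_lhs => rw [← hb, real_inner_comm, real_inner_smul_left, abs_mul, abs_norm]
  simp only [hinner, Real.mul_rpow (norm_nonneg σ) (abs_nonneg _), mul_assoc]
  rw [Module.finrank_eq_card_basis b.toBasis] at hsp
  exact (integrable_abs_inner_orthonormalBasis_rpow_neg_mul_one_add_norm_rpow_neg
    b i₀ hs hsp).const_mul _

lemma integrableOn_compl_ball_abs_inner_rpow_neg_mul_norm_rpow_neg {σ : E} (hσ : σ ≠ 0) {s p : ℝ}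
    (hs : s < 1) (hsp : Module.finrank ℝ E < s + p) :
    IntegrableOn (fun u : E => |⟪u, σ⟫_ℝ| ^ (-s) * ‖u‖ ^ (-p)) (Metric.ball 0 1)ᶜ := by
  have : Nontrivial E := ⟨σ, 0, hσ⟩
  have hd : (1 : ℝ) ≤ Module.finrank ℝ E := by exact_mod_cast Module.finrank_pos (R := ℝ) (M := E)
  refine ((integrable_abs_inner_rpow_neg_mul_one_add_norm_rpow_neg hσ hs hsp).const_mul
    (2 ^ p)).integrableOn.mono' (Measurable.aestronglyMeasurable (by fun_prop))
    (ae_restrict_of_forall_mem measurableSet_ball.compl fun u hu => ?_)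
  have hu1 : 1 ≤ ‖u‖ := by simpa using hu
  rw [Real.norm_of_nonneg (by positivity), mul_left_comm]
  gcongr |⟪u, σ⟫_ℝ| ^ (-s) * ?_
  exact rpow_neg_le_two_rpow_mul_one_add_rpow_neg hu1 (by linarith)

end InnerProductSpace

section ScatteringMode

variable {E : Type*} [NormedAddCommGroup E] [InnerProductSpace ℝ E]

/-- Real part of the rescaled fluid mode `Φ(u) = ν₀ / (ν₀ - i |u|^β (u·σ))` of the scattering
equation, in closed form. -/
def reScatteringMode (β ν₀ : ℝ) (σ u : E) : ℝ :=
  ν₀ ^ 2 / (ν₀ ^ 2 + ‖u‖ ^ (2 * β) * ⟪u, σ⟫_ℝ ^ 2)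

variable {β ν₀ : ℝ} {σ : E}

lemma reScatteringMode_pos (hν₀ : ν₀ ≠ 0) (u : E) : 0 < reScatteringMode β ν₀ σ u := by
  unfold reScatteringMode; positivity

lemma reScatteringMode_nonneg (u : E) : 0 ≤ reScatteringMode β ν₀ σ u := by
  unfold reScatteringMode; positivity

lemma reScatteringMode_le_one (u : E) : reScatteringMode β ν₀ σ u ≤ 1 :=
  div_le_one_of_le₀ (le_add_of_nonneg_right (by positivity)) (by positivity)

lemma reScatteringMode_eq_inv_one_add_sq (hν₀ : ν₀ ≠ 0) (u : E) :
    reScatteringMode β ν₀ σ u = (1 + (‖u‖ ^ β * |⟪u, σ⟫_ℝ| / |ν₀|) ^ 2)⁻¹ := by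
  rw [reScatteringMode, mul_comm 2 β, Real.rpow_mul (norm_nonneg u), Real.rpow_two, div_pow,
    mul_pow, sq_abs, sq_abs]
  field_simp

lemma reScatteringMode_le_rpow_neg (hν₀ : ν₀ ≠ 0) {s : ℝ} (hs0 : 0 ≤ s) (hs2 : s ≤ 2) {u : E}
    (hu : ⟪u, σ⟫_ℝ ≠ 0) :
    reScatteringMode β ν₀ σ u ≤ |ν₀| ^ s * (|⟪u, σ⟫_ℝ| ^ (-s) * ‖u‖ ^ (-(s * β))) := by
  have hu0 : 0 < ‖u‖ := norm_pos_iff.2 fun h => hu (by rw [h, inner_zero_left])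
  calc reScatteringMode β ν₀ σ u
      = (1 + (‖u‖ ^ β * |⟪u, σ⟫_ℝ| / |ν₀|) ^ 2)⁻¹ := reScatteringMode_eq_inv_one_add_sq hν₀ u
    _ ≤ (‖u‖ ^ β * |⟪u, σ⟫_ℝ| / |ν₀|) ^ (-s) :=
        inv_one_add_sq_le_rpow_neg (by positivity) hs0 hs2
    _ = |ν₀| ^ s * (|⟪u, σ⟫_ℝ| ^ (-s) * ‖u‖ ^ (-(s * β))) := by
        rw [Real.div_rpow (by positivity) (abs_nonneg ν₀), Real.rpow_neg (abs_nonneg ν₀),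
          div_inv_eq_mul, Real.mul_rpow (by positivity) (abs_nonneg _), ← Real.rpow_mul hu0.le,
          mul_neg, mul_comm β]
        ring

variable [FiniteDimensional ℝ E] [MeasurableSpace E] [BorelSpace E] {α : ℝ}

@[fun_prop]
lemma measurable_reScatteringMode : Measurable (reScatteringMode β ν₀ σ) := by
  unfold reScatteringMode; fun_prop

lemma integrableOn_ball_reScatteringMode_mul_norm_rpow [Nontrivial E]
    (μ : Measure E) [μ.IsAddHaarMeasure] (hα : α < 0) (r : ℝ) :
    IntegrableOn (fun u => reScatteringMode β ν₀ σ u * ‖u‖ ^ (-(Module.finrank ℝ E : ℝ) - α))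
      (Metric.ball 0 r) μ := by
  refine integrableOn_ball_of_norm_le_rpow (C := 1) (α := Module.finrank ℝ E + α)
    Module.finrank_pos (by linarith) (ae_of_all _ fun u => ?_)
    (Measurable.aestronglyMeasurable (by fun_prop))
  have hnonneg := reScatteringMode_nonneg (β := β) (ν₀ := ν₀) (σ := σ) u
  rw [Real.norm_of_nonneg (by positivity), neg_add']
  gcongr
  exact reScatteringMode_le_one u

lemma integrableOn_compl_ball_reScatteringMode_mul_norm_rpow (hν₀ : ν₀ ≠ 0) (hσ : σ ≠ 0)
    (hα : -(1 + β) < α) (hα0 : α < 0) :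
    IntegrableOn (fun u => reScatteringMode β ν₀ σ u * ‖u‖ ^ (-(Module.finrank ℝ E : ℝ) - α))
      (Metric.ball 0 1)ᶜ := by
  have hβ : 0 < 1 + β := by linarith
  obtain ⟨s, hsα, hs1⟩ : ∃ s, -α / (1 + β) < s ∧ s < 1 :=
    exists_between ((div_lt_one hβ).2 (by linarith))
  have hs0 : 0 < s := (div_pos (by linarith) hβ).trans hsα
  rw [div_lt_iff₀ hβ] at hsα
  refine ((integrableOn_compl_ball_abs_inner_rpow_neg_mul_norm_rpow_neg hσ hs1
    (p := Module.finrank ℝ E + α + s * β) (by linarith)).const_mul (|ν₀| ^ s)).mono'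
    (Measurable.aestronglyMeasurable (by fun_prop)) ?_
  filter_upwards [ae_restrict_of_ae (ae_inner_ne_zero volume hσ)] with u hu
  have hu0 : 0 < ‖u‖ := norm_pos_iff.2 fun h => hu (by rw [h, inner_zero_left])
  have hnonneg := reScatteringMode_nonneg (β := β) (ν₀ := ν₀) (σ := σ) u
  rw [Real.norm_of_nonneg (by positivity)]
  calc reScatteringMode β ν₀ σ u * ‖u‖ ^ (-(Module.finrank ℝ E : ℝ) - α)
      ≤ |ν₀| ^ s * (|⟪u, σ⟫_ℝ| ^ (-s) * ‖u‖ ^ (-(s * β))) *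
          ‖u‖ ^ (-(Module.finrank ℝ E : ℝ) - α) := by
        gcongr; exact reScatteringMode_le_rpow_neg hν₀ hs0.le (by linarith) hu
    _ = |ν₀| ^ s * (|⟪u, σ⟫_ℝ| ^ (-s) * ‖u‖ ^ (-(Module.finrank ℝ E + α + s * β))) := by
        rw [mul_assoc, mul_assoc, ← Real.rpow_add hu0]
        ring_nf

theorem rescaled_mass_scattering_infinite_mass_general (hα : -(1 + β) < α) (hα0 : α < 0)
    (hν₀ : ν₀ ≠ 0) (hσ : σ ≠ 0) :
    Integrable (fun u : E => ν₀ ^ 2 / (ν₀ ^ 2 + ‖u‖ ^ (2 * β) * ⟪u, σ⟫_ℝ ^ 2) *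
        ‖u‖ ^ (-(Module.finrank ℝ E : ℝ) - α)) ∧
      0 < ∫ u : E, ν₀ ^ 2 / (ν₀ ^ 2 + ‖u‖ ^ (2 * β) * ⟪u, σ⟫_ℝ ^ 2) *
        ‖u‖ ^ (-(Module.finrank ℝ E : ℝ) - α) := by
  have : Nontrivial E := ⟨σ, 0, hσ⟩
  have hint : Integrable fun u =>
      reScatteringMode β ν₀ σ u * ‖u‖ ^ (-(Module.finrank ℝ E : ℝ) - α) := by
    simpa only [Set.union_compl_self, integrableOn_univ] using
      (integrableOn_ball_reScatteringMode_mul_norm_rpow volume hα0 1).union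
        (integrableOn_compl_ball_reScatteringMode_mul_norm_rpow hν₀ hσ hα hα0)
  refine ⟨hint, (integral_pos_iff_support_of_nonneg (fun u =>
    mul_nonneg (reScatteringMode_nonneg u) (by positivity)) hint).2 ?_⟩
  have hsupp : {0}ᶜ ⊆ Function.support fun u =>
      reScatteringMode β ν₀ σ u * ‖u‖ ^ (-(Module.finrank ℝ E : ℝ) - α) := fun u hu =>
    (mul_pos (reScatteringMode_pos hν₀ u) (Real.rpow_pos_of_pos (norm_pos_iff.2 hu) _)).ne'
  exact (isOpen_compl_singleton.measure_pos volume ⟨σ, hσ⟩).trans_le (measure_mono hsupp)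

end ScatteringMode

/-- **Finiteness and positivity of the rescaled mass for scattering models with
infinite-mass equilibria** (Remark in Section 5 of the paper, case `α ∈ (-β, 0)`). -/
theorem rescaled_mass_scattering_infinite_mass
    (d : ℕ) (hd : 1 ≤ d) (β α ν₀ : ℝ) (hβ : 0 < β)
    (hα1 : -β < α) (hα2 : α < 0) (hν₀ : 0 < ν₀)
    (σ : Vs d) (hσ : ‖σ‖ = 1) :
    Integrable (fun u : Vs d =>
        ν₀ ^ 2 / (ν₀ ^ 2 + ‖u‖ ^ (2 * β) * ⟪u, σ⟫_ℝ ^ 2) * ‖u‖ ^ (-(d : ℝ) - α))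
      (volume : Measure (Vs d)) ∧
    0 < ∫ u : Vs d,
        ν₀ ^ 2 / (ν₀ ^ 2 + ‖u‖ ^ (2 * β) * ⟪u, σ⟫_ℝ ^ 2) * ‖u‖ ^ (-(d : ℝ) - α) := by
  simpa only [finrank_euclideanSpace_fin] using
    rescaled_mass_scattering_infinite_mass_general (E := Vs d) (by linarith) hα2 hν₀.ne'
      (norm_ne_zero_iff.1 (hσ ▸ one_ne_zero))

end
end

section
/- Explicit solution of the limiting profile equation for the Fokker–Planck case α = 4. Let d ≥ 1 and σ ∈ S^{d−1}. The function Ω : ℝ^d → ℝ defined by Ω(u) := |u|² (u·σ)/(d+8) satisfies Ω(0) = 0 and, for all u ∈ ℝ^d, −|u|² Δ_u Ω(u) + (d+4) u·∇_u Ω(u) = (u·σ) |u|². -/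
/-!
If `f` is harmonic and homogeneous of degree `k` on a Euclidean space of dimension `n`, then
`Δ(|u|² f) = |u|² Δf + 4 u·∇f + 2n f = (2n + 4k) f`, while Euler's identity gives
`u·∇(|u|² f) = (k + 2) |u|² f`. Hence `-|u|² Δ + c u·∇` maps `|u|² f` to
`(c (k + 2) - (2n + 4k)) |u|² f`. For `f = u·σ` and `c = n + 4` the scalar is
`3 (n + 4) - (2n + 4) = n + 8`, the normalisation in the profile.
-/

open MeasureTheory Real Filter Topology intervalIntegral
open scoped InnerProductSpace

noncomputable section

section DirectionalDerivatives

variable {𝕜 E F : Type*} [NontriviallyNormedField 𝕜] [NormedAddCommGroup E] [NormedSpace 𝕜 E]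
  [NormedAddCommGroup F] [NormedSpace 𝕜 F]

lemma fderiv_fderiv_apply_eq_iteratedFDeriv_two {f : E → F} {x : E}
    (hf : DifferentiableAt 𝕜 (fderiv 𝕜 f) x) (v w : E) :
    fderiv 𝕜 (fun y => fderiv 𝕜 f y w) x v = iteratedFDeriv 𝕜 2 f x ![v, w] := by
  rw [fderiv_clm_apply hf (differentiableAt_const w), iteratedFDeriv_two_apply]
  simp

lemma differentiableAt_fderiv_of_contDiffAt_two {f : E → F} {x : E} (hf : ContDiffAt 𝕜 2 f x) :
    DifferentiableAt 𝕜 (fderiv 𝕜 f) x :=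
  (hf.fderiv_right (m := 1) (by norm_num)).differentiableAt one_ne_zero

lemma fderiv_fderiv_smul_apply {a : E → 𝕜} {f : E → F} {x : E} (ha : ContDiffAt 𝕜 2 a x)
    (hf : ContDiffAt 𝕜 2 f x) (v : E) :
    fderiv 𝕜 (fun y => fderiv 𝕜 (fun z => a z • f z) y v) x v =
      a x • fderiv 𝕜 (fun y => fderiv 𝕜 f y v) x v
        + (2 : 𝕜) • fderiv 𝕜 a x v • fderiv 𝕜 f x v
        + fderiv 𝕜 (fun y => fderiv 𝕜 a y v) x v • f x := by
  have leibniz : (fun y => fderiv 𝕜 (fun z => a z • f z) y v) =ᶠ[𝓝 x]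
      fun y => a y • fderiv 𝕜 f y v + fderiv 𝕜 a y v • f y := by
    filter_upwards [ha.eventually (by simp), hf.eventually (by simp)] with y hay hfy
    rw [fderiv_fun_smul (hay.differentiableAt two_ne_zero) (hfy.differentiableAt two_ne_zero)]
    simp
  have ha₁ : DifferentiableAt 𝕜 a x := ha.differentiableAt two_ne_zero
  have hf₁ : DifferentiableAt 𝕜 f x := hf.differentiableAt two_ne_zero
  have ha₂ : DifferentiableAt 𝕜 (fun y => fderiv 𝕜 a y v) x :=
    (differentiableAt_fderiv_of_contDiffAt_two ha).clm_apply (differentiableAt_const v)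
  have hf₂ : DifferentiableAt 𝕜 (fun y => fderiv 𝕜 f y v) x :=
    (differentiableAt_fderiv_of_contDiffAt_two hf).clm_apply (differentiableAt_const v)
  rw [leibniz.fderiv_eq, fderiv_fun_add (ha₁.fun_smul hf₂) (ha₂.fun_smul hf₁),
    fderiv_fun_smul ha₁ hf₂, fderiv_fun_smul ha₂ hf₁]
  simp only [add_apply, smul_apply, ContinuousLinearMap.smulRight_apply]
  module

end DirectionalDerivatives

section NormSq

variable {E F : Type*} [NormedAddCommGroup E] [InnerProductSpace ℝ E]
  [NormedAddCommGroup F] [NormedSpace ℝ F]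

lemma fderiv_norm_sq_smul_apply_self {f : E → F} {x : E} (hf : DifferentiableAt ℝ f x) :
    fderiv ℝ (fun y => ‖y‖ ^ 2 • f y) x x = ‖x‖ ^ 2 • (fderiv ℝ f x x + (2 : ℝ) • f x) := by
  rw [fderiv_fun_smul (differentiableAt_fun_id.norm_sq ℝ) hf, fderiv_norm_sq_apply]
  simp only [add_apply, smul_apply, ContinuousLinearMap.smulRight_apply, innerSL_apply_apply,
    real_inner_self_eq_norm_sq]
  module

lemma sum_fderiv_norm_sq_smul {ι : Type*} [Fintype ι] (b : OrthonormalBasis ι ℝ E)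
    (L : E →L[ℝ] F) (x : E) :
    ∑ i, fderiv ℝ (fun y : E => ‖y‖ ^ 2) x (b i) • L (b i) = (2 : ℝ) • L x := by
  nth_rw 2 [← b.sum_repr' x]
  simp [Finset.smul_sum, real_inner_comm, mul_smul, ofNat_smul_eq_nsmul]

lemma contDiff_norm_sq_mul_inner_div {n : WithTop ℕ∞} (σ : E) (c : ℝ) :
    ContDiff ℝ n (fun w : E => ‖w‖ ^ 2 * ⟪w, σ⟫_ℝ / c) :=
  ((contDiff_norm_sq ℝ).mul (contDiff_id.inner ℝ contDiff_const)).div_const c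

end NormSq

section Laplacian

open scoped Laplacian

variable {ι E F : Type*} [Fintype ι] [NormedAddCommGroup E] [InnerProductSpace ℝ E]
  [FiniteDimensional ℝ E] [NormedAddCommGroup F] [NormedSpace ℝ F]

lemma laplacian_eq_sum_fderiv_fderiv (b : OrthonormalBasis ι ℝ E) {f : E → F} {x : E}
    (hf : DifferentiableAt ℝ (fderiv ℝ f) x) :
    Δ f x = ∑ i, fderiv ℝ (fun y => fderiv ℝ f y (b i)) x (b i) := by
  simp only [InnerProductSpace.laplacian_eq_iteratedFDeriv_orthonormalBasis f b,
    fderiv_fderiv_apply_eq_iteratedFDeriv_two hf]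

lemma laplR_eq_laplacian {d : ℕ} {f : Vs d → ℝ} {v : Vs d}
    (hf : DifferentiableAt ℝ (fderiv ℝ f) v) : laplR f v = Δ f v := by
  simp [laplacian_eq_sum_fderiv_fderiv (EuclideanSpace.basisFun (Fin d) ℝ) hf, laplR]

lemma laplacian_smul_eq_sum (b : OrthonormalBasis ι ℝ E) {a : E → ℝ} {f : E → F} {x : E}
    (ha : ContDiffAt ℝ 2 a x) (hf : ContDiffAt ℝ 2 f x) :
    Δ (fun y => a y • f y) x =
      a x • Δ f x + (2 : ℝ) • ∑ i, fderiv ℝ a x (b i) • fderiv ℝ f x (b i) + Δ a x • f x := by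
  rw [laplacian_eq_sum_fderiv_fderiv b (differentiableAt_fderiv_of_contDiffAt_two (ha.fun_smul hf)),
    laplacian_eq_sum_fderiv_fderiv b (differentiableAt_fderiv_of_contDiffAt_two ha),
    laplacian_eq_sum_fderiv_fderiv b (differentiableAt_fderiv_of_contDiffAt_two hf)]
  simp only [fderiv_fderiv_smul_apply ha hf, Finset.sum_add_distrib, Finset.smul_sum,
    Finset.sum_smul]

lemma laplacian_continuousLinearMap (L : E →L[ℝ] F) (x : E) : Δ (fun y => L y) x = 0 := by
  have fderiv_const : fderiv ℝ (fun y => L y) = fun _ => L := funext fun _ => L.fderiv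
  rw [laplacian_eq_sum_fderiv_fderiv (stdOrthonormalBasis ℝ E)] <;> simp [fderiv_const]

lemma laplacian_norm_sq (x : E) :
    Δ (fun y : E => ‖y‖ ^ 2) x = 2 * (Module.finrank ℝ E : ℝ) := by
  rw [laplacian_eq_sum_fderiv_fderiv (stdOrthonormalBasis ℝ E)
    (differentiableAt_fderiv_of_contDiffAt_two (contDiff_norm_sq ℝ).contDiffAt)]
  have second_deriv (e : E) :
      fderiv ℝ (fun y => fderiv ℝ (fun z : E => ‖z‖ ^ 2) y e) x e = 2 * ‖e‖ ^ 2 := by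
    have first_deriv : (fun y => fderiv ℝ (fun z : E => ‖z‖ ^ 2) y e) =
        (2 • innerSL ℝ e : E →L[ℝ] ℝ) := by
      ext y
      simp [real_inner_comm]
    rw [first_deriv, ContinuousLinearMap.fderiv]
    simp
  simp only [second_deriv, OrthonormalBasis.norm_eq_one]
  simp [mul_comm]

lemma laplacian_norm_sq_smul {f : E → F} {x : E} (hf : ContDiffAt ℝ 2 f x) :
    Δ (fun y => ‖y‖ ^ 2 • f y) x =
      ‖x‖ ^ 2 • Δ f x + (4 : ℝ) • fderiv ℝ f x x + (2 * (Module.finrank ℝ E : ℝ)) • f x := by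
  rw [laplacian_smul_eq_sum (stdOrthonormalBasis ℝ E) (contDiff_norm_sq ℝ).contDiffAt hf,
    sum_fderiv_norm_sq_smul, laplacian_norm_sq]
  module

/-- The drift-diffusion operator `-|u|² Δ + c u·∇` of the limiting profile equation. The
Fokker–Planck case with exponent `α` is `c = dim E + α`. -/
def profileOperator (c : ℝ) (f : E → F) (u : E) : F :=
  -‖u‖ ^ 2 • Δ f u + c • fderiv ℝ f u u

lemma profileOperator_norm_sq_smul_of_homogeneous {f : E → F} {x : E} {k : ℝ}
    (hf : ContDiffAt ℝ 2 f x) (harmonic : Δ f x = 0) (euler : fderiv ℝ f x x = k • f x) (c : ℝ) :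
    profileOperator c (fun y => ‖y‖ ^ 2 • f y) x =
      (c * (k + 2) - (2 * (Module.finrank ℝ E : ℝ) + 4 * k)) • ‖x‖ ^ 2 • f x := by
  rw [profileOperator, laplacian_norm_sq_smul hf,
    fderiv_norm_sq_smul_apply_self (hf.differentiableAt two_ne_zero), harmonic, euler]
  module

lemma profileOperator_norm_sq_smul_continuousLinearMap (c : ℝ) (L : E →L[ℝ] F) (x : E) :
    profileOperator c (fun y => ‖y‖ ^ 2 • L y) x =
      (3 * c - (2 * (Module.finrank ℝ E : ℝ) + 4)) • ‖x‖ ^ 2 • L x := by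
  have euler : fderiv ℝ (fun y => L y) x x = (1 : ℝ) • L x := by rw [L.fderiv, one_smul]
  rw [profileOperator_norm_sq_smul_of_homogeneous L.contDiff.contDiffAt
    (laplacian_continuousLinearMap L x) euler]
  module

theorem fp_limit_profile_alpha_four_general (σ : E) :
    (fun u : E => ‖u‖ ^ 2 * ⟪u, σ⟫_ℝ / ((Module.finrank ℝ E : ℝ) + 8)) 0 = 0 ∧
    ∀ u : E,
      profileOperator ((Module.finrank ℝ E : ℝ) + 4)
          (fun w : E => ‖w‖ ^ 2 * ⟪w, σ⟫_ℝ / ((Module.finrank ℝ E : ℝ) + 8)) u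
        = ⟪u, σ⟫_ℝ * ‖u‖ ^ 2 := by
  refine ⟨by simp, fun u => ?_⟩
  set n : ℝ := (Module.finrank ℝ E : ℝ)
  have hn : n + 8 ≠ 0 := by positivity
  have profile_eq : (fun w : E => ‖w‖ ^ 2 * ⟪w, σ⟫_ℝ / (n + 8)) =
      fun w => ‖w‖ ^ 2 • ((n + 8)⁻¹ • innerSL ℝ σ) w := by
    ext w
    simp [div_eq_inv_mul, real_inner_comm, mul_left_comm]
  calc profileOperator (n + 4) (fun w : E => ‖w‖ ^ 2 * ⟪w, σ⟫_ℝ / (n + 8)) u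
      = (3 * (n + 4) - (2 * n + 4)) • ‖u‖ ^ 2 • ((n + 8)⁻¹ • innerSL ℝ σ) u := by
        rw [profile_eq, profileOperator_norm_sq_smul_continuousLinearMap]
    _ = ⟪u, σ⟫_ℝ * ‖u‖ ^ 2 := by
        simp only [smul_apply, innerSL_apply_apply, smul_eq_mul, real_inner_comm u σ]
        field_simp
        ring

end Laplacian

/-- **Explicit solution of the limiting profile equation for the Fokker–Planck case
`α = 4`** (Corollary 1.13 of the paper): `Ω(u) = |u|²(u·σ)/(d+8)` satisfies `Ω(0)=0` and
`-|u|² ΔΩ + (d+4) u·∇Ω = (u·σ)|u|²`. -/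
theorem fp_limit_profile_alpha_four
    (d : ℕ) (hd : 1 ≤ d) (σ : Vs d) (hσ : ‖σ‖ = 1) :
    (fun u : Vs d => ‖u‖ ^ 2 * ⟪u, σ⟫_ℝ / ((d : ℝ) + 8)) 0 = 0 ∧
    ∀ u : Vs d,
      -‖u‖ ^ 2 * laplR (fun w : Vs d => ‖w‖ ^ 2 * ⟪w, σ⟫_ℝ / ((d : ℝ) + 8)) u
          + ((d : ℝ) + 4) *
              fderiv ℝ (fun w : Vs d => ‖w‖ ^ 2 * ⟪w, σ⟫_ℝ / ((d : ℝ) + 8)) u u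
        = ⟪u, σ⟫_ℝ * ‖u‖ ^ 2 := by
  simpa only [profileOperator, smul_eq_mul, finrank_euclideanSpace_fin, laplR_eq_laplacian
    (differentiableAt_fderiv_of_contDiffAt_two (contDiff_norm_sq_mul_inner_div σ _).contDiffAt)]
    using fp_limit_profile_alpha_four_general σ

end
end
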